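/- arXiv:1711.01064 — 3 statements merged into one kernel-verified Lean document; each statement's English description precedes it below -/
import Mathlib

section
/- For each i ∈ {1,…,N}, replacing z_i by z_i⁻¹ in F̄_{M,N} changes its value by the factor (a²z_i⁻²−a⁻²z_i²)/(a²z_i²−a⁻²z_i⁻²); equivalently, (a²z_i²−a⁻²z_i⁻²) · F̄_{M,N}(z_1,…,z_i⁻¹,…,z_N|w_1,…,w_M|x̄_1,…,x̄_N) = (a²z_i⁻²−a⁻²z_i²) · F̄_{M,N}(z_1,…,z_i,…,z_N|w_1,…,w_M|x̄_1,…,x̄_N). -/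
open Finset

def eps {N : ℕ} (τ : Fin N → Bool) (j : Fin N) : ℤ := if τ j then 1 else -1

noncomputable def pairFactor (a Z1 Z2 : ℂ) (t1 t2 : ℤ) : ℂ :=
  ((a ^ (2:ℤ) * Z1 ^ t1 * Z2 ^ t2 - a ^ (-2:ℤ) * Z1 ^ (-t1) * Z2 ^ (-t2)) *
   (a ^ (2:ℤ) * Z1 ^ (-t1) * Z2 ^ t2 - a ^ (-2:ℤ) * Z1 ^ t1 * Z2 ^ (-t2))) /
  ((Z1 ^ t1 * Z2 ^ t2 - Z1 ^ (-t1) * Z2 ^ (-t2)) *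
   (Z1 ^ (-t1) * Z2 ^ t2 - Z1 ^ t1 * Z2 ^ (-t2)))

/-- The symmetric function `F_{M,N}(z_1,…,z_N|w_1,…,w_M|x_1,…,x_N)`,
where `x k` for `k = 0,…,N-1` encodes `x_{k+1}`. -/
noncomputable def FF (a b : ℂ) (M N : ℕ) (z : Fin N → ℂ) (w : Fin M → ℂ) (x : ℕ → ℕ) : ℂ :=
  (a ^ (2:ℤ) - a ^ (-2:ℤ)) ^ N *
  (∏ j, (-(a ^ (2:ℤ) * z j ^ (2:ℤ)) + a ^ (-2:ℤ) * z j ^ (-2:ℤ))) *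
  ∑ σ : Equiv.Perm (Fin N), ∑ τ : Fin N → Bool,
    (∏ j, (z j ^ (2 * eps τ j) - z j ^ (-(2 * eps τ j)))⁻¹) *
    (∏ p ∈ Finset.univ.filter (fun p : Fin N × Fin N => p.1 < p.2),
      pairFactor a (z (σ p.1)) (z (σ p.2)) (eps τ (σ p.1)) (eps τ (σ p.2))) *
    (∏ k, (b * a⁻¹ * z (σ k) ^ (-(eps τ (σ k))) - b⁻¹ * a * z (σ k) ^ (eps τ (σ k)))) *
    (∏ k, ∏ j : Fin M, (a * z (σ k) ^ (-(eps τ (σ k))) - a⁻¹ * z (σ k) ^ (eps τ (σ k)) * w j)) *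
    (∏ k : Fin N, ∏ j ∈ Finset.univ.filter (fun j : Fin M => (j : ℕ) + 1 < x k.val),
      (a * z (σ k) ^ (-(eps τ (σ k))) * w j - a⁻¹ * z (σ k) ^ (eps τ (σ k)))) *
    (∏ k : Fin N, ∏ j ∈ Finset.univ.filter (fun j : Fin M => x k.val ≤ (j : ℕ)),
      (a * z (σ k) ^ (eps τ (σ k)) - a⁻¹ * z (σ k) ^ (-(eps τ (σ k))) * w j))

/-- The dual symmetric function `F̄_{M,N}(z_1,…,z_N|w_1,…,w_M|x̄_1,…,x̄_N)`. -/
noncomputable def FBar (a b : ℂ) (M N : ℕ) (z : Fin N → ℂ) (w : Fin M → ℂ) (x : ℕ → ℕ) : ℂ :=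
  (a ^ (2:ℤ) - a ^ (-2:ℤ)) ^ N *
  (∏ j, (-(a ^ (2:ℤ) * z j ^ (2:ℤ)) + a ^ (-2:ℤ) * z j ^ (-2:ℤ))) *
  ∑ σ : Equiv.Perm (Fin N), ∑ τ : Fin N → Bool,
    (∏ j, (z j ^ (2 * eps τ j) - z j ^ (-(2 * eps τ j)))⁻¹) *
    (∏ p ∈ Finset.univ.filter (fun p : Fin N × Fin N => p.1 < p.2),
      pairFactor a (z (σ p.1)) (z (σ p.2)) (eps τ (σ p.1)) (eps τ (σ p.2))) *
    (∏ k, (b * a * z (σ k) ^ (eps τ (σ k)) - b⁻¹ * a⁻¹ * z (σ k) ^ (-(eps τ (σ k))))) *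
    (∏ k, ∏ j : Fin M, (a * z (σ k) ^ (-(eps τ (σ k))) * w j - a⁻¹ * z (σ k) ^ (eps τ (σ k)))) *
    (∏ k : Fin N, ∏ j ∈ Finset.univ.filter (fun j : Fin M => (j : ℕ) + 1 < x k.val),
      (a * z (σ k) ^ (-(eps τ (σ k))) - a⁻¹ * z (σ k) ^ (eps τ (σ k)) * w j)) *
    (∏ k : Fin N, ∏ j ∈ Finset.univ.filter (fun j : Fin M => x k.val ≤ (j : ℕ)),
      (a * z (σ k) ^ (eps τ (σ k)) * w j - a⁻¹ * z (σ k) ^ (-(eps τ (σ k)))))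

/-- `xfun T k` is the `(k+1)`-st smallest element of `T`, in 1-based labelling. -/
def xfun {M : ℕ} (T : Finset (Fin M)) (k : ℕ) : ℕ :=
  ((T.sort (· ≤ ·)).map (fun j : Fin M => (j : ℕ) + 1)).getD k 0

/-! In the double sum defining `F̄` the variables enter only through the signed powers
`z_j ^ τ_j`, and inverting `z_i` has the same effect on these as flipping the sign `τ_i`. Summing
over all signs therefore gives a function invariant under `z_i ↦ z_i⁻¹`, and only the `i`-th
factor of the prefactor `∏ (-a² z_j² + a⁻² z_j⁻²)` changes. -/

theorem eps_update_not {N : ℕ} (τ : Fin N → Bool) (i : Fin N) :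
    eps (Function.update τ i (!τ i)) = Function.update (eps τ) i (-eps τ i) := by
  ext j
  obtain rfl | hj := eq_or_ne j i
  · cases h : τ j <;> simp [eps, h]
  · simp [eps, hj]

theorem update_inv_zpow_eps {G : Type*} [DivisionMonoid G] {N : ℕ} (z : Fin N → G) (i : Fin N)
    (τ : Fin N → Bool) (j : Fin N) :
    Function.update z i (z i)⁻¹ j ^ eps τ j = z j ^ eps (Function.update τ i (!τ i)) j := by
  rw [eps_update_not]
  obtain rfl | hj := eq_or_ne j i
  · simp only [Function.update_self, inv_zpow']
  · simp only [Function.update_of_ne hj]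

theorem sum_zpow_eps_update_inv {G R : Type*} [DivisionMonoid G] [AddCommMonoid R] {N : ℕ}
    (f : (Fin N → G) → R) (z : Fin N → G) (i : Fin N) :
    ∑ τ : Fin N → Bool, f (fun j => Function.update z i (z i)⁻¹ j ^ eps τ j) =
      ∑ τ : Fin N → Bool, f (fun j => z j ^ eps τ j) := by
  have flip_involutive :
      Function.Involutive fun τ : Fin N → Bool => Function.update τ i (!τ i) := fun τ => by simp
  simp only [update_inv_zpow_eps]
  exact Equiv.sum_comp flip_involutive.toPerm fun τ => f fun j => z j ^ eps τ j

theorem pairFactor_zpow (a Z₁ Z₂ : ℂ) (t₁ t₂ : ℤ) :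
    pairFactor a (Z₁ ^ t₁) (Z₂ ^ t₂) 1 1 = pairFactor a Z₁ Z₂ t₁ t₂ := by
  simp only [pairFactor, zpow_one, zpow_neg]

/-- The summand of `F̄_{M,N}` attached to a permutation `σ`, as a function of the signed variables
`u_j = z_j ^ τ_j` (so that `F̄_{M,N}` is, up to its prefactor, the sum of these over all `σ` and
`τ`). As the signs are absorbed into `u`, `pairFactor` is used with both exponents `1`. -/
noncomputable def FBarSummand (a b : ℂ) {M N : ℕ} (w : Fin M → ℂ) (x : ℕ → ℕ)
    (σ : Equiv.Perm (Fin N)) (u : Fin N → ℂ) : ℂ :=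
  (∏ j, (u j ^ (2 : ℤ) - (u j ^ (2 : ℤ))⁻¹)⁻¹) *
  (∏ p : Fin N × Fin N with p.1 < p.2, pairFactor a (u (σ p.1)) (u (σ p.2)) 1 1) *
  (∏ k, (b * a * u (σ k) - b⁻¹ * a⁻¹ * (u (σ k))⁻¹)) *
  (∏ k, ∏ j : Fin M, (a * (u (σ k))⁻¹ * w j - a⁻¹ * u (σ k))) *
  (∏ k : Fin N, ∏ j ∈ {j : Fin M | (j : ℕ) + 1 < x k}, (a * (u (σ k))⁻¹ - a⁻¹ * u (σ k) * w j)) *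
  (∏ k : Fin N, ∏ j ∈ {j : Fin M | x k ≤ (j : ℕ)}, (a * u (σ k) * w j - a⁻¹ * (u (σ k))⁻¹))

theorem FBar_eq_prod_mul_sum_FBarSummand (a b : ℂ) (M N : ℕ) (z : Fin N → ℂ) (w : Fin M → ℂ)
    (x : ℕ → ℕ) :
    FBar a b M N z w x =
      (a ^ (2 : ℤ) - a ^ (-2 : ℤ)) ^ N *
      (∏ j, (-(a ^ (2 : ℤ) * z j ^ (2 : ℤ)) + a ^ (-2 : ℤ) * z j ^ (-2 : ℤ))) *
      ∑ σ : Equiv.Perm (Fin N), ∑ τ : Fin N → Bool,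
        FBarSummand a b w x σ fun j => z j ^ eps τ j := by
  simp only [FBar, FBarSummand, pairFactor_zpow, zpow_mul', zpow_neg]

theorem mul_prod_update {ι R : Type*} [Fintype ι] [DecidableEq ι] [CommMonoid R] (f : ι → R)
    (i : ι) (c : R) : f i * ∏ j, Function.update f i c j = c * ∏ j, f j := by
  rw [prod_update_of_mem (mem_univ i), sdiff_singleton_eq_erase, mul_left_comm,
    mul_prod_erase univ f (mem_univ i)]

theorem prefactor_inversion {ι K : Type*} [Fintype ι] [DecidableEq ι] [Field K] (a : K)
    (z : ι → K) (i : ι) :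
    (a ^ (2 : ℤ) * z i ^ (2 : ℤ) - a ^ (-2 : ℤ) * z i ^ (-2 : ℤ)) *
      ∏ j, (-(a ^ (2 : ℤ) * Function.update z i (z i)⁻¹ j ^ (2 : ℤ)) +
        a ^ (-2 : ℤ) * Function.update z i (z i)⁻¹ j ^ (-2 : ℤ)) =
    (a ^ (2 : ℤ) * z i ^ (-2 : ℤ) - a ^ (-2 : ℤ) * z i ^ (2 : ℤ)) *
      ∏ j, (-(a ^ (2 : ℤ) * z j ^ (2 : ℤ)) + a ^ (-2 : ℤ) * z j ^ (-2 : ℤ)) := by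
  let g (y : K) : K := -(a ^ (2 : ℤ) * y ^ (2 : ℤ)) + a ^ (-2 : ℤ) * y ^ (-2 : ℤ)
  have g_inv : g (z i)⁻¹ = -(a ^ (2 : ℤ) * z i ^ (-2 : ℤ)) + a ^ (-2 : ℤ) * z i ^ (2 : ℤ) := by
    simp only [g, inv_zpow', neg_neg]
  have exchange : g (z i) * ∏ j, g (Function.update z i (z i)⁻¹ j) =
      g (z i)⁻¹ * ∏ j, g (z j) := by
    simpa only [← Function.comp_update, Function.comp_apply] using
      mul_prod_update (g ∘ z) i (g (z i)⁻¹)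
  rw [g_inv] at exchange
  linear_combination -exchange

theorem FBar_inversion_general (a b : ℂ) (M N : ℕ) (z : Fin N → ℂ) (w : Fin M → ℂ) (x : ℕ → ℕ)
    (_ha : a ≠ 0) (_hb : b ≠ 0) (_hz : ∀ j, z j ≠ 0) (_hz4 : ∀ j, z j ^ 4 ≠ 1)
    (_hzz : ∀ j k, j ≠ k → z j ^ 2 * z k ^ 2 ≠ 1)
    (_hzz' : ∀ j k, j ≠ k → z j ^ 2 ≠ z k ^ 2)
    (i : Fin N) :
    (a ^ (2 : ℤ) * z i ^ (2 : ℤ) - a ^ (-2 : ℤ) * z i ^ (-2 : ℤ)) *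
      FBar a b M N (Function.update z i (z i)⁻¹) w x =
    (a ^ (2 : ℤ) * z i ^ (-2 : ℤ) - a ^ (-2 : ℤ) * z i ^ (2 : ℤ)) * FBar a b M N z w x := by
  simp only [FBar_eq_prod_mul_sum_FBarSummand, sum_zpow_eps_update_inv]
  linear_combination (a ^ (2 : ℤ) - a ^ (-2 : ℤ)) ^ N *
    (∑ σ : Equiv.Perm (Fin N), ∑ τ : Fin N → Bool,
      FBarSummand a b w x σ fun j => z j ^ eps τ j) * prefactor_inversion a z i

/-- Property (3) for the dual: replacing `z_i` by `z_i⁻¹` in `F̄_{M,N}` changes its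
value by the factor `(a²z_i⁻²−a⁻²z_i²)/(a²z_i²−a⁻²z_i⁻²)`. -/
theorem FBar_inversion (a b : ℂ) (M N : ℕ) (z : Fin N → ℂ) (w : Fin M → ℂ) (x : ℕ → ℕ)
    (ha : a ≠ 0) (hb : b ≠ 0) (hz : ∀ j, z j ≠ 0) (hz4 : ∀ j, z j ^ 4 ≠ 1)
    (hzz : ∀ j k, j ≠ k → z j ^ 2 * z k ^ 2 ≠ 1)
    (hzz' : ∀ j k, j ≠ k → z j ^ 2 ≠ z k ^ 2)
    (hx1 : ∀ k : Fin N, 1 ≤ x k.val) (hxM : ∀ k : Fin N, x k.val ≤ M)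
    (hmono : ∀ j k : Fin N, j < k → x j.val < x k.val)
    (i : Fin N) :
    (a ^ (2:ℤ) * z i ^ (2:ℤ) - a ^ (-2:ℤ) * z i ^ (-2:ℤ)) *
      FBar a b M N (Function.update z i (z i)⁻¹) w x
    = (a ^ (2:ℤ) * z i ^ (-2:ℤ) - a ^ (-2:ℤ) * z i ^ (2:ℤ)) * FBar a b M N z w x := by
  exact FBar_inversion_general a b M N z w x ha hb hz hz4 hzz hzz' i
end

section
/- Suppose x_N ≠ M (that is, x_N < M). Then the following factorization holds: F_{M,N}(z_1,…,z_N|w_1,…,w_M|x_1,…,x_N) = ∏_{j=1}^N (az_j⁻¹−a⁻¹z_j w_M)(az_j−a⁻¹z_j⁻¹w_M) × F_{M−1,N}(z_1,…,z_N|w_1,…,w_{M−1}|x_1,…,x_N). -/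
/-!
A summand of `F` depends on `w_M` only through the factors of its particles at the site `M`. Since
no particle sits there, a particle with spectral parameter `u = z_j^{±1}` contributes
`(a u⁻¹ - a⁻¹ u w_M) (a u - a⁻¹ u⁻¹ w_M)`. This is invariant under `u ↦ u⁻¹`, so the product over
the particles is the same for all sign vectors `τ` and permutations `σ` and leaves the sum.
-/

open Finset

section FinProd

variable {R : Type*} [CommMonoid R] {n : ℕ}

theorem prod_filter_univ_castSucc (p : Fin (n + 1) → Prop) [DecidablePred p]
    (f : Fin (n + 1) → R) :
    ∏ j with p j, f j =
      (∏ j : Fin n with p j.castSucc, f j.castSucc) *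
        if p (Fin.last n) then f (Fin.last n) else 1 := by
  simp only [prod_filter, Fin.prod_univ_castSucc]

theorem prod_filter_add_one_lt_castSucc {x : ℕ} (hx : x ≤ n) (f : Fin (n + 1) → R) :
    ∏ j ∈ univ.filter fun j : Fin (n + 1) => (j : ℕ) + 1 < x, f j =
      ∏ j ∈ univ.filter fun j : Fin n => (j : ℕ) + 1 < x, f j.castSucc := by
  have last_notMem : ¬ ((Fin.last n : ℕ) + 1 < x) := by simp only [Fin.val_last]; omega
  rw [prod_filter_univ_castSucc, if_neg last_notMem, mul_one]
  simp only [Fin.val_castSucc]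

theorem prod_filter_le_castSucc {x : ℕ} (hx : x ≤ n) (f : Fin (n + 1) → R) :
    ∏ j ∈ univ.filter fun j : Fin (n + 1) => x ≤ (j : ℕ), f j =
      (∏ j ∈ univ.filter fun j : Fin n => x ≤ (j : ℕ), f j.castSucc) * f (Fin.last n) := by
  have last_mem : x ≤ (Fin.last n : ℕ) := by rwa [Fin.val_last]
  rw [prod_filter_univ_castSucc, if_pos last_mem]
  simp only [Fin.val_castSucc]

end FinProd

section Weights

variable {K : Type*} [Field K]

/-- The factor that a site with inhomogeneity `w`, lying to the right of a particle with spectral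
parameter `u`, contributes to the wave function of that particle. -/
def siteWeight (a u w : K) : K :=
  (a * u⁻¹ - a⁻¹ * u * w) * (a * u - a⁻¹ * u⁻¹ * w)

/-- The one-particle wave function: the `w`-dependent factor of a summand of `FF` that belongs to
the particle with position `x` and spectral parameter `u = z_{σ(k)}^{τ_{σ(k)}}`. Positions are
1-based, so the site `j : Fin M` is at position `j + 1`. -/
def particleWeight {M : ℕ} (a u : K) (w : Fin M → K) (x : ℕ) : K :=
  (∏ j, (a * u⁻¹ - a⁻¹ * u * w j)) *
  (∏ j ∈ univ.filter fun j : Fin M => (j : ℕ) + 1 < x, (a * u⁻¹ * w j - a⁻¹ * u)) *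
  ∏ j ∈ univ.filter fun j : Fin M => x ≤ (j : ℕ), (a * u - a⁻¹ * u⁻¹ * w j)

theorem siteWeight_inv (a u w : K) : siteWeight a u⁻¹ w = siteWeight a u w := by
  rw [siteWeight, inv_inv, mul_comm, siteWeight]

theorem siteWeight_zpow_eps {N : ℕ} (a u w : K) (τ : Fin N → Bool) (j : Fin N) :
    siteWeight a (u ^ eps τ j) w = siteWeight a u w := by
  cases h : τ j <;> simp [eps, h, siteWeight_inv]

theorem prod_siteWeight_perm {N : ℕ} (a w : K) (z : Fin N → K) (σ : Equiv.Perm (Fin N))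
    (τ : Fin N → Bool) :
    ∏ k, siteWeight a (z (σ k) ^ eps τ (σ k)) w = ∏ j, siteWeight a (z j) w := by
  rw [Equiv.prod_comp σ fun j => siteWeight a (z j ^ eps τ j) w]
  simp only [siteWeight_zpow_eps]

theorem particleWeight_succ {M x : ℕ} (hx : x ≤ M) (a u : K) (w : Fin (M + 1) → K) :
    particleWeight a u w x =
      siteWeight a u (w (Fin.last M)) * particleWeight a u (fun j => w j.castSucc) x := by
  simp only [particleWeight, siteWeight, Fin.prod_univ_castSucc,
    prod_filter_add_one_lt_castSucc hx, prod_filter_le_castSucc hx]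
  ring

theorem prod_particleWeight_succ {M N : ℕ} (a : K) (z : Fin N → K) (w : Fin (M + 1) → K)
    {x : ℕ → ℕ} (hx : ∀ k : Fin N, x k ≤ M) (σ : Equiv.Perm (Fin N)) (τ : Fin N → Bool) :
    ∏ k : Fin N, particleWeight a (z (σ k) ^ eps τ (σ k)) w (x k) =
      (∏ j, siteWeight a (z j) (w (Fin.last M))) *
        ∏ k : Fin N, particleWeight a (z (σ k) ^ eps τ (σ k)) (fun j => w j.castSucc) (x k) := by
  simp only [particleWeight_succ (hx _), prod_mul_distrib, prod_siteWeight_perm]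

end Weights

/-- The coefficient of the summand of `FF` indexed by `σ` and `τ`, i.e. its factors that depend
neither on the inhomogeneities `w` nor on the positions `x`. -/
noncomputable def amplitude (a b : ℂ) {N : ℕ} (z : Fin N → ℂ) (σ : Equiv.Perm (Fin N))
    (τ : Fin N → Bool) : ℂ :=
  (∏ j, (z j ^ (2 * eps τ j) - z j ^ (-(2 * eps τ j)))⁻¹) *
  (∏ p : Fin N × Fin N with p.1 < p.2,
    pairFactor a (z (σ p.1)) (z (σ p.2)) (eps τ (σ p.1)) (eps τ (σ p.2))) *
  ∏ k, (b * a⁻¹ * z (σ k) ^ (-(eps τ (σ k))) - b⁻¹ * a * z (σ k) ^ (eps τ (σ k)))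

theorem FF_eq_sum_amplitude_mul_particleWeight (a b : ℂ) (M N : ℕ) (z : Fin N → ℂ)
    (w : Fin M → ℂ) (x : ℕ → ℕ) :
    FF a b M N z w x =
      (a ^ (2:ℤ) - a ^ (-2:ℤ)) ^ N *
      (∏ j, (-(a ^ (2:ℤ) * z j ^ (2:ℤ)) + a ^ (-2:ℤ) * z j ^ (-2:ℤ))) *
      ∑ σ : Equiv.Perm (Fin N), ∑ τ : Fin N → Bool,
        amplitude a b z σ τ * ∏ k : Fin N, particleWeight a (z (σ k) ^ eps τ (σ k)) w (x k) := by
  simp only [FF, amplitude, particleWeight, prod_mul_distrib, zpow_neg, mul_assoc]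

theorem F_factorization_general (a b : ℂ) (M N : ℕ)
    (z : Fin N → ℂ) (w : Fin (M + 1) → ℂ) (x : ℕ → ℕ)
    (ha : a ≠ 0) (hb : b ≠ 0) (hz : ∀ j, z j ≠ 0) (hz4 : ∀ j, z j ^ 4 ≠ 1)
    (hzz : ∀ j k, j ≠ k → z j ^ 2 * z k ^ 2 ≠ 1)
    (hzz' : ∀ j k, j ≠ k → z j ^ 2 ≠ z k ^ 2)
    (hx : ∀ k : Fin N, x k ≤ M) :
    FF a b (M + 1) N z w x =
      (∏ j, ((a * (z j)⁻¹ - a⁻¹ * z j * w (Fin.last M)) *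
        (a * z j - a⁻¹ * (z j)⁻¹ * w (Fin.last M)))) *
      FF a b M N z (fun j => w (Fin.castSucc j)) x := by
  change _ = (∏ j, siteWeight a (z j) (w (Fin.last M))) * _
  simp only [FF_eq_sum_amplitude_mul_particleWeight, prod_particleWeight_succ a z w hx,
    mul_left_comm (amplitude _ _ _ _ _), ← mul_sum]
  exact mul_left_comm _ _ _

/-- Property (4), second case, for `F`: when `x_N ≠ M` (i.e. `x_N < M`; sizes
re-parametrized as `M+1` sites and `N+1` particles, so the condition reads
`x N ≤ M`), the `w_M`-dependence factors out of `F_{M,N}`. -/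
theorem F_factorization (a b : ℂ) (M N : ℕ)
    (z : Fin (N + 1) → ℂ) (w : Fin (M + 1) → ℂ) (x : ℕ → ℕ)
    (ha : a ≠ 0) (hb : b ≠ 0) (hz : ∀ j, z j ≠ 0) (hz4 : ∀ j, z j ^ 4 ≠ 1)
    (hzz : ∀ j k, j ≠ k → z j ^ 2 * z k ^ 2 ≠ 1)
    (hzz' : ∀ j k, j ≠ k → z j ^ 2 ≠ z k ^ 2)
    (hx1 : ∀ k : Fin (N + 1), 1 ≤ x k.val) (hxM : ∀ k : Fin (N + 1), x k.val ≤ M + 1)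
    (hmono : ∀ j k : Fin (N + 1), j < k → x j.val < x k.val)
    (hlast : x N ≤ M) :
    FF a b (M + 1) (N + 1) z w x
    = (∏ j : Fin (N + 1),
        ((a * (z j)⁻¹ - a⁻¹ * z j * w (Fin.last M)) *
         (a * z j - a⁻¹ * (z j)⁻¹ * w (Fin.last M)))) *
      FF a b M (N + 1) z (fun j => w (Fin.castSucc j)) x :=
  F_factorization_general a b M (N + 1) z w x ha hb hz hz4 hzz hzz' fun k =>
    (StrictMono.monotone (f := fun k : Fin (N + 1) => x k) hmono (Fin.le_last k)).trans hlast
end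

section
/- Suppose x̄_N = M. Then, viewed as a function of the single variable w_M (with all other arguments fixed), F̄_{M,N}(z_1,…,z_N|w_1,…,w_M|x̄_1,…,x̄_N) is a polynomial in w_M of degree at most 2N−1. -/
open Finset

/-!
In each summand of `F̄` the variable `w_m` enters only through the last three products. For each `k`,
the product over all sites contributes one affine factor in `w_m`, the product over the sites left of
`x̄_k` contributes one exactly when `m < x̄_k`, and the product over the sites right of `x̄_k`
contributes one exactly when `x̄_k < m`. So the degree in `w_m` is at most `N + #{k | x̄_k ≠ m}`, and
for `m = M` the position `x̄_N = M` lowers the trivial bound `2N` by one.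

Positions are numbered from 1, so the site `m : Fin M` carries the position `m + 1`.
-/

/-- `f` agrees with a polynomial of degree at most `d`. A predicate on functions rather than
polynomials, so that the formula defining `FBar` need not be repeated with polynomial entries. -/
def IsPolynomialOfDegreeLE {R : Type*} [Semiring R] (d : ℕ) (f : R → R) : Prop :=
  ∃ p : Polynomial R, p.degree ≤ d ∧ ∀ u, f u = p.eval u

namespace IsPolynomialOfDegreeLE

section Semiring

variable {R : Type*} [Semiring R] {d e : ℕ} {f : R → R}

lemma mono (hf : IsPolynomialOfDegreeLE d f) (hde : d ≤ e) : IsPolynomialOfDegreeLE e f := by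
  obtain ⟨p, hp, hfp⟩ := hf
  exact ⟨p, hp.trans (by exact_mod_cast hde), hfp⟩

lemma const (d : ℕ) (c : R) : IsPolynomialOfDegreeLE d fun _ ↦ c :=
  ⟨Polynomial.C c, Polynomial.degree_C_le.trans (by exact_mod_cast d.zero_le), by simp⟩

lemma sum {ι : Type*} {s : Finset ι} {f : ι → R → R}
    (hf : ∀ i ∈ s, IsPolynomialOfDegreeLE d (f i)) :
    IsPolynomialOfDegreeLE d fun u ↦ ∑ i ∈ s, f i u := by
  choose! p hp hfp using hf
  refine ⟨∑ i ∈ s, p i, (Polynomial.degree_sum_le _ _).trans (Finset.sup_le hp), fun u ↦ ?_⟩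
  rw [Polynomial.eval_finsetSum]
  exact Finset.sum_congr rfl fun i hi ↦ hfp i hi u

end Semiring

section CommSemiring

variable {R : Type*} [CommSemiring R] {d e : ℕ} {f g : R → R}

lemma mul (hf : IsPolynomialOfDegreeLE d f) (hg : IsPolynomialOfDegreeLE e g) :
    IsPolynomialOfDegreeLE (d + e) fun u ↦ f u * g u := by
  obtain ⟨p, hp, hfp⟩ := hf
  obtain ⟨q, hq, hgq⟩ := hg
  exact ⟨p * q, by exact_mod_cast Polynomial.degree_mul_le_of_le hp hq, by simp [hfp, hgq]⟩

lemma const_mul (c : R) (hf : IsPolynomialOfDegreeLE d f) :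
    IsPolynomialOfDegreeLE d fun u ↦ c * f u := by
  simpa using (const 0 c).mul hf

lemma mul_const (hf : IsPolynomialOfDegreeLE d f) (c : R) :
    IsPolynomialOfDegreeLE d fun u ↦ f u * c :=
  hf.mul (const 0 c)

lemma prod {ι : Type*} {s : Finset ι} {d : ι → ℕ} {f : ι → R → R}
    (hf : ∀ i ∈ s, IsPolynomialOfDegreeLE (d i) (f i)) :
    IsPolynomialOfDegreeLE (∑ i ∈ s, d i) fun u ↦ ∏ i ∈ s, f i u := by
  classical
  induction s using Finset.induction_on with
  | empty => exact const _ _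
  | insert i s hi ih =>
    simp only [Finset.sum_insert hi, Finset.prod_insert hi]
    exact (hf i (mem_insert_self i s)).mul (ih fun j hj ↦ hf j (mem_insert_of_mem hj))

lemma prod_update {ι : Type*} [DecidableEq ι] (w : ι → R) (m : ι) (s : Finset ι)
    {g : ι → R → R} (hg : IsPolynomialOfDegreeLE d (g m)) :
    IsPolynomialOfDegreeLE (if m ∈ s then d else 0)
      fun u ↦ ∏ j ∈ s, g j (Function.update w m u j) := by
  have eq_of_ne (u : R) {j : ι} (hj : j ≠ m) : g j (Function.update w m u j) = g j (w j) := by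
    rw [Function.update_of_ne hj]
  split_ifs with hm
  · have (u : R) : ∏ j ∈ s, g j (Function.update w m u j) = g m u * ∏ j ∈ s.erase m, g j (w j) := by
      rw [← mul_prod_erase s _ hm, Function.update_self]
      exact congrArg _ (prod_congr rfl fun j hj ↦ eq_of_ne u (ne_of_mem_erase hj))
    simpa only [this] using hg.mul_const _
  · have (u : R) : ∏ j ∈ s, g j (Function.update w m u j) = ∏ j ∈ s, g j (w j) :=
      prod_congr rfl fun j hj ↦ eq_of_ne u (ne_of_mem_of_not_mem hj hm)
    simpa only [this] using const 0 _

lemma prod_prod_update {ι κ : Type*} [DecidableEq ι] [Fintype κ] (w : ι → R) (m : ι)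
    (s : κ → Finset ι) (g : κ → ι → R → R) (hg : ∀ k, IsPolynomialOfDegreeLE 1 (g k m)) :
    IsPolynomialOfDegreeLE #{k | m ∈ s k}
      fun u ↦ ∏ k, ∏ j ∈ s k, g k j (Function.update w m u j) := by
  rw [card_filter]
  exact prod fun k _ ↦ prod_update w m (s k) (hg k)

end CommSemiring

section Ring

variable {R : Type*} [Ring R]

lemma mul_sub_const (c e : R) : IsPolynomialOfDegreeLE 1 fun u ↦ c * u - e :=
  ⟨Polynomial.C c * Polynomial.X + Polynomial.C (-e), Polynomial.degree_linear_le,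
    fun u ↦ by simp [sub_eq_add_neg]⟩

lemma const_sub_mul (c e : R) : IsPolynomialOfDegreeLE 1 fun u ↦ c - e * u := by
  simpa [sub_eq_add_neg, add_comm] using mul_sub_const (-e) (-c)

end Ring

end IsPolynomialOfDegreeLE

lemma card_filter_gt_add_card_filter_lt {ι α : Type*} [Fintype ι] [LinearOrder α]
    (f : ι → α) (a : α) : #{i | a < f i} + #{i | f i < a} = #{i | f i ≠ a} := by
  classical
  rw [← card_union_of_disjoint (disjoint_filter.2 fun i _ h ↦ h.not_gt), ← filter_or]
  simp only [ne_iff_lt_or_gt, or_comm]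

lemma card_filter_ne_lt_card {ι α : Type*} [Fintype ι] [DecidableEq α] (f : ι → α) (i : ι) :
    #{j | f j ≠ f i} < Fintype.card ι :=
  card_lt_univ_of_notMem (x := i) (by simp)

open IsPolynomialOfDegreeLE in
theorem FBar_polynomial_in_wM_general (a b : ℂ) (M N : ℕ) (z : Fin N → ℂ) (w : Fin M → ℂ)
    (x : ℕ → ℕ) (ha : a ≠ 0) (hb : b ≠ 0) (hz : ∀ j, z j ≠ 0) (hz4 : ∀ j, z j ^ 4 ≠ 1)
    (hzz : ∀ j k, j ≠ k → z j ^ 2 * z k ^ 2 ≠ 1)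
    (hzz' : ∀ j k, j ≠ k → z j ^ 2 ≠ z k ^ 2) (m : Fin M) :
    IsPolynomialOfDegreeLE (N + #{k : Fin N | x k ≠ m + 1})
      fun u ↦ FBar a b M N z (Function.update w m u) x := by
  refine const_mul _ (sum fun σ _ ↦ sum fun τ _ ↦ ?_)
  have all_sites := prod_prod_update w m (fun _ : Fin N ↦ univ)
    (fun k _ v ↦ a * z (σ k) ^ (-eps τ (σ k)) * v - a⁻¹ * z (σ k) ^ eps τ (σ k))
    fun _ ↦ mul_sub_const _ _
  have left_sites := prod_prod_update w m (fun k : Fin N ↦ {j : Fin M | (j : ℕ) + 1 < x k})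
    (fun k _ v ↦ a * z (σ k) ^ (-eps τ (σ k)) - a⁻¹ * z (σ k) ^ eps τ (σ k) * v)
    fun _ ↦ const_sub_mul _ _
  have right_sites := prod_prod_update w m (fun k : Fin N ↦ {j : Fin M | x k ≤ (j : ℕ)})
    (fun k _ v ↦ a * z (σ k) ^ eps τ (σ k) * v - a⁻¹ * z (σ k) ^ (-eps τ (σ k)))
    fun _ ↦ mul_sub_const _ _
  refine (((all_sites.const_mul _).mul left_sites).mul right_sites).mono (le_of_eq ?_)
  rw [← card_filter_gt_add_card_filter_lt, ← add_assoc]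
  simp

/-- Property (1) for the dual: when `x̄_N = M`, the symmetric function `F̄_{M,N}`,
viewed as a function of `w_M` alone, is a polynomial in `w_M` of degree at most
`2N−1`. -/
theorem FBar_polynomial_in_wM (a b : ℂ) (M N : ℕ) (hM : 0 < M) (hN : 0 < N)
    (z : Fin N → ℂ) (w : Fin M → ℂ) (x : ℕ → ℕ)
    (ha : a ≠ 0) (hb : b ≠ 0) (hz : ∀ j, z j ≠ 0) (hz4 : ∀ j, z j ^ 4 ≠ 1)
    (hzz : ∀ j k, j ≠ k → z j ^ 2 * z k ^ 2 ≠ 1)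
    (hzz' : ∀ j k, j ≠ k → z j ^ 2 ≠ z k ^ 2)
    (hx1 : ∀ k : Fin N, 1 ≤ x k.val) (hxM : ∀ k : Fin N, x k.val ≤ M)
    (hmono : ∀ j k : Fin N, j < k → x j.val < x k.val)
    (hlast : x (N - 1) = M) :
    ∃ p : Polynomial ℂ, p.degree ≤ ((2 * N - 1 : ℕ) : WithBot ℕ) ∧
      ∀ u : ℂ,
        FBar a b M N z (Function.update w ⟨M - 1, Nat.sub_lt hM Nat.one_pos⟩ u) x
          = p.eval u := by
  have card_lt : #{k : Fin N | x k ≠ M - 1 + 1} < N := by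
    simpa [hlast, Nat.sub_add_cancel hM] using
      card_filter_ne_lt_card (fun k : Fin N ↦ x k) ⟨N - 1, by omega⟩
  exact (FBar_polynomial_in_wM_general a b M N z w x ha hb hz hz4 hzz hzz' _).mono (by grind)
end
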